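/- Let ρ*(π, m, δ) denote the unique ρ ∈ (0,1) satisfying π·δ·g(ρ/(2πmδ)) + (1−π)·δ·g(ρ/(2(1−π)mδ)) = 1 − ρ². Then the map (π, m, δ) ↦ Φ(−ρ*(π,m,δ)·m) is strictly decreasing in π on (0,1/2) (for fixed m, δ), strictly decreasing in m on (0,∞) (for fixed π ∈ (0,1/2), δ), and strictly decreasing in δ on (0,∞) (for fixed π ∈ (0,1/2), m). -/

import Mathlib

open MeasureTheory

/-- The standard normal density. -/
noncomputable def normPDF (x : ℝ) : ℝ := Real.exp (-x ^ 2 / 2) / Real.sqrt (2 * Real.pi)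

/-- The standard normal cumulative distribution function. -/
noncomputable def normCDF (x : ℝ) : ℝ := ∫ t in Set.Iic x, normPDF t

/-- `g₁(x) = x·Φ(x) + φ(x)`, equal to `E[(Z+x)₊]` for standard normal `Z`. -/
noncomputable def g1 (x : ℝ) : ℝ := x * normCDF x + normPDF x

/-- `g₂(x) = (x²+1)·Φ(x) + x·φ(x)`, equal to `E[(Z+x)₊²]` for standard normal `Z`. -/
noncomputable def g2 (x : ℝ) : ℝ := (x ^ 2 + 1) * normCDF x + x * normPDF x

/-- The inverse of `g₁` (on its range `(0,∞)`). -/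
noncomputable def g1inv : ℝ → ℝ := Function.invFun g1

/-- `g = g₂ ∘ g₁⁻¹`. -/
noncomputable def gfn (t : ℝ) : ℝ := g2 (g1inv t)

lemma aux_pdf_pos (x : ℝ) : 0 < normPDF x := by
  unfold normPDF; positivity

lemma aux_pdf_le (x : ℝ) : normPDF x ≤ Real.exp (x + 1 / 2) := by
  unfold normPDF
  have h1 : (1 : ℝ) ≤ Real.sqrt (2 * Real.pi) := by
    rw [Real.one_le_sqrt]; nlinarith [Real.pi_gt_three]
  have h2 : Real.exp (-x ^ 2 / 2) ≤ Real.exp (x + 1 / 2) := by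
    apply Real.exp_le_exp.mpr; nlinarith [sq_nonneg (x + 1)]
  exact (div_le_self (Real.exp_pos _).le h1).trans h2

lemma aux_pdf_cont : Continuous normPDF := by
  unfold normPDF; fun_prop

lemma aux_pdf_int : Integrable normPDF := by
  unfold normPDF
  apply Integrable.div_const
  have := integrable_exp_neg_mul_sq (b := 1 / 2) (by norm_num)
  refine this.congr (Filter.Eventually.of_forall fun x => ?_)
  simp only
  congr 1; ring

lemma aux_pdf_deriv (x : ℝ) : HasDerivAt normPDF (-x * normPDF x) x := by
  unfold normPDF
  have h : HasDerivAt (fun x : ℝ => -x ^ 2 / 2) (-x) x := by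
    refine (((hasDerivAt_id x).pow 2).neg.div_const 2).congr_deriv ?_
    simp
    ring
  refine (h.exp.div_const (Real.sqrt (2 * Real.pi))).congr_deriv ?_
  ring

lemma aux_cdf_eq (x : ℝ) : normCDF x = normCDF 0 + ∫ t in (0 : ℝ)..x, normPDF t := by
  have := intervalIntegral.integral_Iic_sub_Iic (μ := volume) (f := normPDF) (a := 0) (b := x)
    aux_pdf_int.integrableOn aux_pdf_int.integrableOn
  unfold normCDF
  linarith

lemma aux_cdf_deriv (x : ℝ) : HasDerivAt normCDF (normPDF x) x := by
  have h : HasDerivAt (fun x => normCDF 0 + ∫ t in (0 : ℝ)..x, normPDF t) (normPDF x) x :=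
    (intervalIntegral.integral_hasDerivAt_right (aux_pdf_cont.intervalIntegrable _ _)
      (aux_pdf_cont.stronglyMeasurableAtFilter _ _) aux_pdf_cont.continuousAt).const_add _
  exact h.congr_of_eventuallyEq (Filter.Eventually.of_forall aux_cdf_eq)

lemma aux_strictMono {f f' : ℝ → ℝ} (h : ∀ x, HasDerivAt f (f' x) x) (hp : ∀ x, 0 < f' x) :
    StrictMono f := by
  apply strictMono_of_deriv_pos
  intro x; rw [(h x).deriv]; exact hp x

lemma aux_pos {f f' : ℝ → ℝ} (h : ∀ x, HasDerivAt f (f' x) x) (hp : ∀ x, 0 < f' x)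
    (hl : Filter.Tendsto f Filter.atBot (nhds 0)) (x : ℝ) : 0 < f x := by
  have hm := aux_strictMono h hp
  exact (hm.monotone.le_of_tendsto hl (x - 1)).trans_lt (hm (by linarith))

lemma aux_cdf_mono : StrictMono normCDF := aux_strictMono aux_cdf_deriv aux_pdf_pos

lemma aux_cdf_nonneg (x : ℝ) : 0 ≤ normCDF x :=
  integral_nonneg fun t => (aux_pdf_pos t).le

lemma aux_cdf_pos (x : ℝ) : 0 < normCDF x :=
  (aux_cdf_nonneg (x - 1)).trans_lt (aux_cdf_mono (by linarith))

lemma aux_cdf_le (x : ℝ) : normCDF x ≤ Real.exp (x + 1 / 2) := by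
  have h1 : ∀ t : ℝ, Real.exp (t + 1 / 2) = Real.exp t * Real.exp (1 / 2) := fun t => Real.exp_add _ _
  have hi : IntegrableOn (fun t : ℝ => Real.exp (t + 1 / 2)) (Set.Iic x) := by
    simp_rw [h1]
    exact (integrableOn_exp_Iic x).mul_const _
  calc normCDF x ≤ ∫ t in Set.Iic x, Real.exp (t + 1 / 2) :=
        integral_mono aux_pdf_int.integrableOn hi aux_pdf_le
    _ = Real.exp (x + 1 / 2) := by
        simp_rw [h1]
        rw [integral_mul_const, integral_exp_Iic]

lemma aux_lim (n : ℕ) : Filter.Tendsto (fun x : ℝ => x ^ n * Real.exp (x + 1 / 2)) Filter.atBot (nhds 0) := by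
  have h := (Real.tendsto_pow_mul_exp_neg_atTop_nhds_zero n).comp Filter.tendsto_neg_atBot_atTop
  have h2 := h.const_mul ((-1) ^ n * Real.exp (1 / 2))
  rw [mul_zero] at h2
  refine h2.congr fun x => ?_
  simp only [Function.comp, neg_neg]
  rw [Real.exp_add, neg_pow x n]
  have : ((-1 : ℝ) ^ n) * (-1) ^ n = 1 := by rw [← mul_pow]; norm_num
  linear_combination (x ^ n * Real.exp x * Real.exp (1 / 2)) * this

lemma aux_lim' {f : ℝ → ℝ} (h0 : ∀ x, 0 ≤ f x) (h : ∀ x, f x ≤ Real.exp (x + 1 / 2)) (n : ℕ) :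
    Filter.Tendsto (fun x : ℝ => x ^ n * f x) Filter.atBot (nhds 0) := by
  refine squeeze_zero_norm (fun x => ?_) (by simpa using (aux_lim n).norm)
  simp only [norm_mul, Real.norm_eq_abs, abs_of_nonneg (h0 x), norm_pow]
  gcongr
  simpa using h x

lemma aux_cdf_lim (n : ℕ) : Filter.Tendsto (fun x : ℝ => x ^ n * normCDF x) Filter.atBot (nhds 0) :=
  aux_lim' aux_cdf_nonneg aux_cdf_le n

lemma aux_pdf_lim (n : ℕ) : Filter.Tendsto (fun x : ℝ => x ^ n * normPDF x) Filter.atBot (nhds 0) :=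
  aux_lim' (fun x => (aux_pdf_pos x).le) aux_pdf_le n

lemma aux_g1_lim : Filter.Tendsto g1 Filter.atBot (nhds 0) := by
  have := (aux_cdf_lim 1).add (aux_pdf_lim 0)
  rw [add_zero] at this
  exact this.congr fun x => by unfold g1; ring

lemma aux_g2_lim : Filter.Tendsto g2 Filter.atBot (nhds 0) := by
  have := ((aux_cdf_lim 2).add (aux_cdf_lim 0)).add (aux_pdf_lim 1)
  rw [add_zero, add_zero] at this
  exact this.congr fun x => by unfold g2; ring

lemma aux_g1_deriv (x : ℝ) : HasDerivAt g1 (normCDF x) x := by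
  have := ((hasDerivAt_id x).mul (aux_cdf_deriv x)).add (aux_pdf_deriv x)
  refine this.congr_deriv ?_
  simp only [id]; ring

lemma aux_g1_pos (x : ℝ) : 0 < g1 x := aux_pos aux_g1_deriv aux_cdf_pos aux_g1_lim x

lemma aux_g1_mono : StrictMono g1 := aux_strictMono aux_g1_deriv aux_cdf_pos

lemma aux_g2_deriv (x : ℝ) : HasDerivAt g2 (2 * g1 x) x := by
  have := ((((hasDerivAt_id x).pow 2).add_const 1).mul (aux_cdf_deriv x)).add
    ((hasDerivAt_id x).mul (aux_pdf_deriv x))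
  refine this.congr_deriv ?_
  simp [g1]; ring

lemma aux_g2_pos (x : ℝ) : 0 < g2 x :=
  aux_pos aux_g2_deriv (fun x => mul_pos two_pos (aux_g1_pos x)) aux_g2_lim x

lemma aux_D_pos (x : ℝ) : 0 < normCDF x ^ 2 - g1 x * normPDF x := by
  refine aux_pos (f := fun x => normCDF x ^ 2 - g1 x * normPDF x)
    (f' := fun x => normPDF x * g2 x) (fun x => ?_)
    (fun x => mul_pos (aux_pdf_pos x) (aux_g2_pos x)) ?_ x
  · have := ((aux_cdf_deriv x).pow 2).sub ((aux_g1_deriv x).mul (aux_pdf_deriv x))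
    refine this.congr_deriv ?_
    simp [g1, g2]; ring
  · have h1 := (aux_cdf_lim 0).mul (aux_cdf_lim 0)
    have h2 := aux_g1_lim.mul (aux_pdf_lim 0)
    have := h1.sub h2
    simp only [mul_zero, sub_zero] at this
    exact this.congr fun x => by ring

noncomputable def kfn (x : ℝ) : ℝ := g1 x / normCDF x

lemma aux_k_mono : StrictMono kfn := by
  refine aux_strictMono (f' := fun x => (normCDF x ^ 2 - g1 x * normPDF x) / normCDF x ^ 2)
    (fun x => ?_) (fun x => div_pos (aux_D_pos x) (pow_pos (aux_cdf_pos x) 2))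
  have := (aux_g1_deriv x).div (aux_cdf_deriv x) (aux_cdf_pos x).ne'
  refine this.congr_deriv ?_
  ring

lemma aux_k_pos (x : ℝ) : 0 < kfn x := div_pos (aux_g1_pos x) (aux_cdf_pos x)

lemma aux_tangent {x y : ℝ} (hxy : y ≠ x) :
    g2 x + 2 * kfn x * (g1 y - g1 x) < g2 y := by
  have hd : ∀ z, HasDerivAt (fun z => g2 z - 2 * kfn x * g1 z)
      (2 * normCDF z * (kfn z - kfn x)) z := fun z => by
    refine ((aux_g2_deriv z).sub ((aux_g1_deriv z).const_mul (2 * kfn x))).congr_deriv ?_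
    have : kfn z * normCDF z = g1 z := div_mul_cancel₀ _ (aux_cdf_pos z).ne'
    rw [← this]; ring
  have hc : Continuous (fun z => g2 z - 2 * kfn x * g1 z) :=
    continuous_iff_continuousAt.mpr fun z => (hd z).continuousAt
  rcases lt_or_gt_of_ne hxy with h | h
  · have := strictAntiOn_of_deriv_neg (convex_Iic x) hc.continuousOn (fun z hz => by
      rw [interior_Iic] at hz
      rw [(hd z).deriv]
      have := aux_k_mono hz
      have := aux_cdf_pos z
      apply mul_neg_of_pos_of_neg <;> linarith) h.le (Set.mem_Iic.mpr le_rfl) h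
    simp only at this
    linarith
  · have := strictMonoOn_of_deriv_pos (convex_Ici x) hc.continuousOn (fun z hz => by
      rw [interior_Ici] at hz
      rw [(hd z).deriv]
      have := aux_k_mono hz
      have := aux_cdf_pos z
      apply mul_pos <;> linarith) (Set.mem_Ici.mpr le_rfl) h.le h
    simp only at this
    linarith

lemma aux_g1_inv {t : ℝ} (ht : 0 < t) : g1 (g1inv t) = t := by
  apply Function.invFun_eq
  have hc : Continuous g1 := continuous_iff_continuousAt.mpr fun z => (aux_g1_deriv z).continuousAt
  obtain ⟨a, ha⟩ := (aux_g1_lim.eventually_lt_const ht).exists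
  have hb : t ≤ g1 (t / normCDF 0) := by
    have h0 := aux_cdf_pos 0
    have h1 : 0 ≤ t / normCDF 0 := by positivity
    have h2 := aux_cdf_mono.monotone h1
    have h3 := aux_pdf_pos (t / normCDF 0)
    have h4 : t / normCDF 0 * normCDF 0 = t := div_mul_cancel₀ _ h0.ne'
    unfold g1
    nlinarith
  exact mem_range_of_exists_le_of_exists_ge hc ⟨a, ha.le⟩ ⟨_, hb⟩

noncomputable def sfn (t : ℝ) : ℝ := 2 * kfn (g1inv t)

lemma aux_s_pos (t : ℝ) : 0 < sfn t := mul_pos two_pos (aux_k_pos _)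

lemma aux_s_mono {a b : ℝ} (ha : 0 < a) (hab : a < b) : sfn a < sfn b := by
  have : g1inv a < g1inv b := by
    rw [← aux_g1_mono.lt_iff_lt, aux_g1_inv ha, aux_g1_inv (ha.trans hab)]; exact hab
  have := aux_k_mono this
  unfold sfn; linarith

lemma aux_g_tan {a b : ℝ} (ha : 0 < a) (hb : 0 < b) (hab : b ≠ a) :
    gfn a + sfn a * (b - a) < gfn b := by
  have h : g1inv b ≠ g1inv a := fun h => hab (by
    rw [← aux_g1_inv ha, ← aux_g1_inv hb, h])
  have := aux_tangent h
  rw [aux_g1_inv ha, aux_g1_inv hb] at this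
  exact this

lemma aux_g_mono {a b : ℝ} (ha : 0 < a) (hab : a < b) : gfn a < gfn b := by
  have := aux_g_tan ha (ha.trans hab) hab.ne'
  have := mul_pos (aux_s_pos a) (sub_pos.mpr hab)
  linarith

lemma aux_L_anti {a b : ℝ} (ha : 0 < a) (hab : a < b) :
    gfn b - b * sfn b < gfn a - a * sfn a := by
  have := aux_g_tan (ha.trans hab) ha hab.ne
  have := aux_s_mono ha hab
  nlinarith

lemma aux_L_nonpos {a : ℝ} (ha : 0 < a) : gfn a - a * sfn a ≤ 0 := by
  have hl : Filter.Tendsto (fun y => g2 y - sfn a * g1 y) Filter.atBot (nhds 0) := by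
    simpa using aux_g2_lim.sub (aux_g1_lim.const_mul (sfn a))
  refine ge_of_tendsto hl ?_
  filter_upwards [Filter.eventually_lt_atBot (g1inv a)] with y hy
  have := aux_tangent hy.ne
  rw [aux_g1_inv ha] at this
  unfold gfn sfn
  linarith

lemma aux_L_neg {a : ℝ} (ha : 0 < a) : gfn a < a * sfn a := by
  have h1 := aux_L_anti (half_pos ha) (half_lt_self ha)
  have h2 := aux_L_nonpos (half_pos ha)
  linarith

/-- Strict monotonicity of `g(t)/t`, in perspective form. -/
lemma aux_persp {c d e : ℝ} (hc : 0 < c) (hd : 0 < d) (hde : d < e) :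
    e * gfn (c / e) < d * gfn (c / d) := by
  have he := hd.trans hde
  have hlt : c / e < c / d := div_lt_div_of_pos_left hc hd hde
  have ha : 0 < c / e := by positivity
  have h1 := aux_g_tan ha (ha.trans hlt) hlt.ne'
  have h2 := aux_L_neg ha
  have e1 : d * (c / d) = c := by field_simp
  have e2 : e * (c / e) = c := by field_simp
  have h3 := mul_lt_mul_of_pos_left h1 hd
  have h4 := mul_lt_mul_of_pos_left h2 (sub_pos.mpr hde)
  generalize gfn (c / e) = A at *
  generalize gfn (c / d) = B at *
  generalize sfn (c / e) = S at *
  have h5 : d * (A + S * (c / d - c / e)) = d * A + (e - d) * (c / e * S) := by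
    linear_combination S * e1 - S * e2
  linarith

lemma aux_pi {c p q : ℝ} (hc : 0 < c) (hp : 0 < p) (hpq : p < q) (hq : q < 1 / 2) :
    q * gfn (c / q) + (1 - q) * gfn (c / (1 - q)) < p * gfn (c / p) + (1 - p) * gfn (c / (1 - p)) := by
  have hq0 := hp.trans hpq
  have hq1 : 0 < 1 - q := by linarith
  have hp1 : 0 < 1 - p := by linarith
  have l1 : c / q < c / p := div_lt_div_of_pos_left hc hp hpq
  have l2 : c / (1 - p) < c / (1 - q) := div_lt_div_of_pos_left hc hq1 (by linarith)
  have l3 : c / (1 - q) < c / q := div_lt_div_of_pos_left hc hq0 (by linarith)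
  have a1 := mul_lt_mul_of_pos_left
    (aux_g_tan (a := c / q) (b := c / p) (by positivity) (by positivity) l1.ne') hp
  have a2 := mul_lt_mul_of_pos_left
    (aux_g_tan (a := c / (1 - q)) (b := c / (1 - p)) (by positivity) (by positivity) l2.ne) hp1
  have a3 := mul_lt_mul_of_pos_left
    (aux_L_anti (a := c / (1 - q)) (by positivity) l3) (sub_pos.mpr hpq)
  have e1 : p * (c / p) = c := by field_simp
  have e2 : q * (c / q) = c := by field_simp
  have e3 : (1 - p) * (c / (1 - p)) = c := by field_simp
  have e4 : (1 - q) * (c / (1 - q)) = c := by field_simp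
  generalize c / p = u at *
  generalize c / q = a at *
  generalize c / (1 - p) = v at *
  generalize c / (1 - q) = b at *
  have e5 : p * (gfn a + sfn a * (u - a)) + (1 - p) * (gfn b + sfn b * (v - b)) =
      q * gfn a + (1 - q) * gfn b +
      ((q - p) * (gfn b - b * sfn b) - (q - p) * (gfn a - a * sfn a)) := by
    linear_combination sfn a * e1 - sfn a * e2 + sfn b * e3 - sfn b * e4
  linarith

noncomputable def Lhs (p δ w : ℝ) : ℝ :=
  p * δ * gfn (w / (2 * p * δ)) + (1 - p) * δ * gfn (w / (2 * (1 - p) * δ))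

lemma aux_Lhs_mono {p δ w z : ℝ} (hp : p ∈ Set.Ioo (0 : ℝ) (1 / 2)) (hδ : 0 < δ) (hw : 0 < w)
    (hwz : w < z) : Lhs p δ w < Lhs p δ z := by
  obtain ⟨h0, h1⟩ := hp
  have h2 : 0 < 1 - p := by linarith
  unfold Lhs
  have := aux_g_mono (a := w / (2 * p * δ)) (b := z / (2 * p * δ)) (by positivity) (by gcongr)
  have := aux_g_mono (a := w / (2 * (1 - p) * δ)) (b := z / (2 * (1 - p) * δ))
    (by positivity) (by gcongr)
  gcongr

lemma aux_Lhs_mono_le {p δ w z : ℝ} (hp : p ∈ Set.Ioo (0 : ℝ) (1 / 2)) (hδ : 0 < δ) (hw : 0 < w)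
    (hwz : w ≤ z) : Lhs p δ w ≤ Lhs p δ z := by
  rcases hwz.eq_or_lt with h | h
  · rw [h]
  · exact (aux_Lhs_mono hp hδ hw h).le

lemma aux_Lhs_delta {p δ ε w : ℝ} (hp : p ∈ Set.Ioo (0 : ℝ) (1 / 2)) (hδ : 0 < δ) (hw : 0 < w)
    (h : δ < ε) : Lhs p ε w < Lhs p δ w := by
  obtain ⟨h0, h1⟩ := hp
  have h2 : 0 < 1 - p := by linarith
  have a1 := aux_persp (c := w / (2 * p)) (by positivity) hδ h
  have a2 := aux_persp (c := w / (2 * (1 - p))) (by positivity) hδ h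
  unfold Lhs
  rw [div_div, div_div] at a1 a2
  have := mul_lt_mul_of_pos_left a1 h0
  have := mul_lt_mul_of_pos_left a2 h2
  linarith

lemma aux_Lhs_pi {p q δ w : ℝ} (hp : 0 < p) (hpq : p < q) (hq : q < 1 / 2) (hδ : 0 < δ)
    (hw : 0 < w) : Lhs q δ w < Lhs p δ w := by
  have a := mul_lt_mul_of_pos_left (aux_pi (c := w / (2 * δ)) (by positivity) hp hpq hq) hδ
  unfold Lhs
  simp only [div_div] at a
  have e : ∀ x : ℝ, 2 * x * δ = 2 * δ * x := fun x => by ring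
  simp only [e]
  linarith

/-- Under optimal margin rebalancing, the common asymptotic
test error `Φ(−ρ*(π,m,δ)·m)` is strictly decreasing in each of `π`
(on `(0,1/2)`), `m`, and `δ`. -/
theorem stmt_19 (ρstar : ℝ → ℝ → ℝ → ℝ)
    (hρstar : ∀ p m δ : ℝ, p ∈ Set.Ioo (0 : ℝ) 1 → 0 < m → 0 < δ →
      ρstar p m δ ∈ Set.Ioo (0 : ℝ) 1 ∧
      p * δ * gfn (ρstar p m δ / (2 * p * m * δ)) +
          (1 - p) * δ * gfn (ρstar p m δ / (2 * (1 - p) * m * δ)) =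
        1 - (ρstar p m δ) ^ 2)
    :
    (∀ m δ : ℝ, 0 < m → 0 < δ →
      StrictAntiOn (fun p => normCDF (-(ρstar p m δ * m))) (Set.Ioo 0 (1 / 2))) ∧
    (∀ p δ : ℝ, p ∈ Set.Ioo (0 : ℝ) (1 / 2) → 0 < δ →
      StrictAntiOn (fun m => normCDF (-(ρstar p m δ * m))) (Set.Ioi 0)) ∧
    (∀ p m : ℝ, p ∈ Set.Ioo (0 : ℝ) (1 / 2) → 0 < m →
      StrictAntiOn (fun δ => normCDF (-(ρstar p m δ * m))) (Set.Ioi 0)) := by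
  have key : ∀ p m δ : ℝ, p ∈ Set.Ioo (0 : ℝ) (1 / 2) → 0 < m → 0 < δ →
      0 < ρstar p m δ ∧ Lhs p δ (ρstar p m δ / m) = 1 - (ρstar p m δ) ^ 2 := by
    intro p m δ hp hm hδ
    obtain ⟨h1, h2⟩ := hρstar p m δ ⟨hp.1, by linarith [hp.2]⟩ hm hδ
    refine ⟨h1.1, ?_⟩
    rw [← h2]
    unfold Lhs
    simp only [div_div]
    rw [show m * (2 * p * δ) = 2 * p * m * δ by ring,
      show m * (2 * (1 - p) * δ) = 2 * (1 - p) * m * δ by ring]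
  refine ⟨fun m δ hm hδ p hp q hq hpq => ?_, fun p δ hp hδ m hm n hn hmn => ?_,
    fun p m hp hm δ hδ ε hε hδε => ?_⟩
  · apply aux_cdf_mono
    obtain ⟨r1, k1⟩ := key p m δ hp hm hδ
    obtain ⟨r2, k2⟩ := key q m δ hq hm hδ
    have : ρstar p m δ < ρstar q m δ := by
      by_contra! hle
      have h1 := aux_Lhs_mono_le (z := ρstar p m δ / m) hq hδ (div_pos r2 hm) (by gcongr)
      have h2 := aux_Lhs_pi hp.1 hpq hq.2 hδ (div_pos r1 hm)
      nlinarith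
    nlinarith
  · rw [Set.mem_Ioi] at hm hn
    apply aux_cdf_mono
    obtain ⟨r1, k1⟩ := key p m δ hp hm hδ
    obtain ⟨r2, k2⟩ := key p n δ hp hn hδ
    by_contra! hle
    have hlt : ρstar p n δ < ρstar p m δ := by
      by_contra! h
      nlinarith
    have h1 := aux_Lhs_mono (z := ρstar p m δ / m) hp hδ (div_pos r2 hn)
      (div_lt_div₀ hlt hmn.le r1.le hm)
    nlinarith
  · rw [Set.mem_Ioi] at hδ hε
    apply aux_cdf_mono
    obtain ⟨r1, k1⟩ := key p m δ hp hm hδ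
    obtain ⟨r2, k2⟩ := key p m ε hp hm hε
    have : ρstar p m δ < ρstar p m ε := by
      by_contra! hle
      have h1 := aux_Lhs_mono_le (z := ρstar p m δ / m) hp hε (div_pos r2 hm) (by gcongr)
      have h2 := aux_Lhs_delta hp hδ (div_pos r1 hm) hδε
      nlinarith
    nlinarith
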